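/- Let G be a connected cactus graph with at least 3 vertices, i.e., a connected graph in which every block (maximal 2-connected subgraph) is an edge or a cycle; equivalently, an iterated coalescence of cycles and edges. Then H_G = H_G^ψ = [1,∞), and [2,∞) ⊆ H_G^φ ⊆ [1,∞). -/

import Mathlib

open Set Matrix

noncomputable section

/-- Entrywise power function `x ↦ x^α` on nonnegative reals, with the convention `0^α := 0`. -/
def powEnt (α x : ℝ) : ℝ := if x = 0 then 0 else x ^ α

/-- The odd extension `ψ_α(x) = sgn(x)|x|^α` of the power function, with `ψ_α(0) = 0`. -/
def psiF (α x : ℝ) : ℝ := Real.sign x * |x| ^ α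

/-- The even extension `φ_α(x) = |x|^α` of the power function, with `φ_α(0) = 0`. -/
def phiF (α x : ℝ) : ℝ := if x = 0 then 0 else |x| ^ α

/-- `P_G(I)`: positive semidefinite matrices with entries in `I` and zeros outside
the edge pattern of `G`. -/
def PsetG {V : Type*} [Fintype V] (G : SimpleGraph V) (I : Set ℝ) :
    Set (Matrix V V ℝ) :=
  {A | A.PosSemidef ∧ (∀ i j, A i j ∈ I) ∧ ∀ i j, i ≠ j → ¬ G.Adj i j → A i j = 0}

/-- `H_G`: the set of entrywise powers preserving `P_G([0,∞))`. -/
def HsetG {V : Type*} [Fintype V] (G : SimpleGraph V) : Set ℝ :=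
  {α | ∀ A ∈ PsetG G (Ici (0 : ℝ)), A.map (powEnt α) ∈ PsetG G univ}

/-- `H_G^ψ`: the set of powers `α` such that `ψ_α` preserves `P_G(ℝ)`. -/
def HsetPsi {V : Type*} [Fintype V] (G : SimpleGraph V) : Set ℝ :=
  {α | ∀ A ∈ PsetG G univ, A.map (psiF α) ∈ PsetG G univ}

/-- `H_G^φ`: the set of powers `α` such that `φ_α` preserves `P_G(ℝ)`. -/
def HsetPhi {V : Type*} [Fintype V] (G : SimpleGraph V) : Set ℝ :=
  {α | ∀ A ∈ PsetG G univ, A.map (phiF α) ∈ PsetG G univ}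

/-- The set of which the critical exponent is the least element:
all `α` such that every `β ≥ α` lies in `H`. -/
def CEset (H : Set ℝ) : Set ℝ := {α | ∀ β, α ≤ β → β ∈ H}

/-- The positive integers, as a set of reals. -/
def posNats : Set ℝ := {x | ∃ k : ℕ, 0 < k ∧ x = k}

/-- The odd positive integers `−1+2ℕ`, as a set of reals. -/
def oddNats : Set ℝ := {x | ∃ k : ℕ, 0 < k ∧ x = 2 * k - 1}

/-- The even positive integers `2ℕ`, as a set of reals. -/
def evenNats : Set ℝ := {x | ∃ k : ℕ, 0 < k ∧ x = 2 * k}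

/-- `addCycleAt G v p`: the graph `G` with a cycle of `p` edges attached at the vertex `v`
(for `p = 2` this degenerates to a pendant edge at `v`): the `p − 1` new vertices form a path
whose two endpoints are joined to `v`. -/
def addCycleAt {V : Type*} (G : SimpleGraph V) (v : V) (p : ℕ) :
    SimpleGraph (V ⊕ Fin (p - 1)) :=
  SimpleGraph.fromRel (fun x y =>
    match x, y with
    | Sum.inl a, Sum.inl b => G.Adj a b
    | Sum.inl a, Sum.inr i => a = v ∧ ((i : ℕ) = 0 ∨ (i : ℕ) = p - 2)
    | Sum.inr i, Sum.inr j => (j : ℕ) = (i : ℕ) + 1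
    | Sum.inr _, Sum.inl _ => False)

/-- Connected cactus graphs: iterated coalescences of cycles and edges, built from a single
vertex by repeatedly attaching, at a vertex, either a pendant edge (`p = 2`) or a cycle
(`p ≥ 3`). -/
inductive CactusBuilt : ∀ {W : Type}, SimpleGraph W → Prop
  | single : CactusBuilt (⊥ : SimpleGraph (Fin 1))
  | attach : ∀ {W : Type} (G : SimpleGraph W) (v : W) (p : ℕ),
      2 ≤ p → CactusBuilt G → CactusBuilt (addCycleAt G v p)

/-!
A positive semidefinite matrix whose pattern is a coalescence of two graphs is a sum `B + C` of
positive semidefinite matrices supported on the two pieces: take for `B` the Schur complement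
obtained by eliminating the vertices outside the first piece. The two summands overlap in a single
diagonal entry, where superadditivity of `x ↦ x ^ α` for `α ≥ 1` suffices, so it remains to treat
cycles. Eliminating a vertex whose neighbours are not adjacent shortens a cycle and changes the
entries in only one off-diagonal position, where the two summands cancel and oddness of `ψ_α` is
used. This stops at the triangle: there the pivot part `R` has rank one and `A - R` lives on a
`2 × 2` block, on which `ψ_α` is Loewner monotone since `|x| ^ (α - 1)` preserves positive
semidefiniteness of `2 × 2` matrices. Powers `α < 1` already fail on a path with three vertices.
-/

section PsiF

lemma psiF_zero (α : ℝ) : psiF α 0 = 0 := by simp [psiF]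

lemma psiF_of_pos (α : ℝ) {x : ℝ} (hx : 0 < x) : psiF α x = x ^ α := by
  rw [psiF, Real.sign_of_pos hx, one_mul, abs_of_pos hx]

lemma psiF_neg (α x : ℝ) : psiF α (-x) = -psiF α x := by
  rw [psiF, psiF, Real.sign_neg, abs_neg, neg_mul]

lemma psiF_nonneg (α : ℝ) {x : ℝ} (hx : 0 ≤ x) : 0 ≤ psiF α x := by
  rcases hx.eq_or_lt with rfl | hx
  · exact (psiF_zero α).ge
  · exact (psiF_of_pos α hx).symm ▸ Real.rpow_nonneg hx.le α

lemma psiF_eq_mul_abs_rpow (α x : ℝ) : psiF α x = x * |x| ^ (α - 1) := by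
  have key {y : ℝ} (hy : 0 < y) : psiF α y = y * |y| ^ (α - 1) := by
    rw [psiF_of_pos α hy, abs_of_pos hy, Real.rpow_sub_one hy.ne', mul_div_cancel₀ _ hy.ne']
  rcases lt_trichotomy x 0 with hx | rfl | hx
  · simpa [psiF_neg] using key (neg_pos.2 hx)
  · simp [psiF_zero]
  · exact key hx

lemma psiF_mul (α x y : ℝ) : psiF α (x * y) = psiF α x * psiF α y := by
  simp only [psiF_eq_mul_abs_rpow, abs_mul, Real.mul_rpow (abs_nonneg x) (abs_nonneg y)]
  ring

lemma psiF_div (α x y : ℝ) : psiF α (x / y) = psiF α x / psiF α y := by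
  by_cases hy : y = 0
  · simp [hy, psiF_zero]
  have hy' : psiF α y * psiF α y⁻¹ = 1 := by
    rw [← psiF_mul, mul_inv_cancel₀ hy, psiF_of_pos α one_pos, Real.one_rpow]
  rw [div_eq_mul_inv, psiF_mul, eq_inv_of_mul_eq_one_right hy', div_eq_mul_inv]

lemma psiF_add_le {α a b : ℝ} (hα : 1 ≤ α) (ha : 0 ≤ a) (hb : 0 ≤ b) :
    psiF α a + psiF α b ≤ psiF α (a + b) := by
  rcases ha.eq_or_lt with rfl | ha
  · simp [psiF_zero]
  rcases hb.eq_or_lt with rfl | hb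
  · simp [psiF_zero]
  rw [psiF_of_pos α ha, psiF_of_pos α hb, psiF_of_pos α (add_pos ha hb)]
  exact Real.add_rpow_le_rpow_add ha.le hb.le hα

lemma hasDerivAt_psiF {α : ℝ} (hα : 1 ≤ α) (x : ℝ) :
    HasDerivAt (psiF α) (α * |x| ^ (α - 1)) x := by
  have hpos {y : ℝ} (hy : 0 < y) : HasDerivAt (psiF α) (α * |y| ^ (α - 1)) y := by
    rw [abs_of_pos hy]
    refine (Real.hasDerivAt_rpow_const (Or.inr hα)).congr_of_eventuallyEq ?_
    filter_upwards [Ioi_mem_nhds hy] with z hz using psiF_of_pos α hz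
  rcases lt_trichotomy x 0 with hx | rfl | hx
  · have h := ((hpos (neg_pos.2 hx)).scomp x (hasDerivAt_neg x)).neg
    simpa [Function.comp_def, psiF_neg, Pi.neg_def] using h
  · have hcont : Continuous fun y : ℝ => |y| ^ (α - 1) :=
      continuous_abs.rpow_const fun _ => Or.inr (sub_nonneg.2 hα)
    have hderiv : α * |(0 : ℝ)| ^ (α - 1) = |(0 : ℝ)| ^ (α - 1) := by
      rcases hα.eq_or_lt with rfl | h
      · simp
      · simp [Real.zero_rpow (sub_pos.2 h).ne']
    rw [hderiv, hasDerivAt_iff_tendsto_slope]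
    refine ((hcont.tendsto 0).mono_left nhdsWithin_le_nhds).congr' ?_
    filter_upwards [self_mem_nhdsWithin] with y hy
    rw [slope_def_field, psiF_zero, sub_zero, sub_zero, psiF_eq_mul_abs_rpow,
      mul_div_cancel_left₀ _ hy]
  · exact hpos hx

end PsiF

section PosSemidef

variable {V W : Type*}

lemma posSemidef_apply_comm {A : Matrix W W ℝ} (hA : A.PosSemidef) (i j : W) : A i j = A j i :=
  hA.isHermitian.apply j i

lemma posSemidef_fin_two_iff {A : Matrix (Fin 2) (Fin 2) ℝ} :
    A.PosSemidef ↔ A 0 1 = A 1 0 ∧ 0 ≤ A 0 0 ∧ 0 ≤ A 1 1 ∧ A 0 1 ^ 2 ≤ A 0 0 * A 1 1 := by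
  constructor
  · intro hA
    have hdet := hA.det_nonneg
    have hcomm := posSemidef_apply_comm hA 0 1
    rw [det_fin_two, ← hcomm] at hdet
    exact ⟨hcomm, hA.diag_nonneg, hA.diag_nonneg, by linarith⟩
  · rintro ⟨hcomm, h0, h1, hsq⟩
    refine posSemidef_iff_dotProduct_mulVec.2 ⟨IsHermitian.ext fun i j => ?_, fun z => ?_⟩
    · fin_cases i <;> fin_cases j <;> simp [hcomm]
    have hform : star z ⬝ᵥ (A *ᵥ z)
        = A 0 0 * z 0 ^ 2 + 2 * A 0 1 * z 0 * z 1 + A 1 1 * z 1 ^ 2 := by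
      simp only [dotProduct, Pi.star_apply, star_trivial, mulVec, Fin.sum_univ_two, ← hcomm]
      ring
    rw [hform]
    rcases h0.eq_or_lt with h | h
    · have h01 : A 0 1 = 0 := by
        rw [← h, zero_mul] at hsq
        exact pow_eq_zero_iff two_ne_zero |>.1 (le_antisymm hsq (sq_nonneg _))
      rw [← h, h01]
      simpa using mul_nonneg h1 (sq_nonneg (z 1))
    · refine nonneg_of_mul_nonneg_right ?_ h
      linear_combination sq_nonneg (A 0 0 * z 0 + A 0 1 * z 1) +
        mul_nonneg (sub_nonneg.2 hsq) (sq_nonneg (z 1))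

lemma sq_apply_le_of_posSemidef {A : Matrix W W ℝ} (hA : A.PosSemidef) (i j : W) :
    A i j ^ 2 ≤ A i i * A j j :=
  (posSemidef_fin_two_iff.1 (hA.submatrix ![i, j])).2.2.2

lemma apply_eq_zero_of_posSemidef_of_diag_eq_zero {A : Matrix W W ℝ} (hA : A.PosSemidef) {u : W}
    (hu : A u u = 0) (i : W) : A i u = 0 := by
  have h := sq_apply_le_of_posSemidef hA i u
  rw [hu, mul_zero] at h
  exact pow_eq_zero_iff two_ne_zero |>.1 (le_antisymm h (sq_nonneg _))

lemma posSemidef_of_submatrix [Finite W] {A : Matrix W W ℝ} (hA : A.IsHermitian) {e : V → W}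
    (he : Function.Injective e) (hzero : ∀ i ∉ range e, ∀ j, A i j = 0)
    (hsub : (A.submatrix e e).PosSemidef) : A.PosSemidef := by
  have := Fintype.ofFinite W
  have := Finite.of_injective e he
  have := Fintype.ofFinite V
  have hzero' (i j : W) (hj : j ∉ range e) : A i j = 0 := by
    rw [← hA.apply, hzero j hj, star_zero]
  refine posSemidef_iff_dotProduct_mulVec.2 ⟨hA, fun z => ?_⟩
  have hform : star (z ∘ e) ⬝ᵥ (A.submatrix e e *ᵥ (z ∘ e)) = star z ⬝ᵥ (A *ᵥ z) := by
    refine Fintype.sum_of_injective e he _ _ (fun i hi => ?_) fun a => ?_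
    · simp [mulVec, dotProduct, hzero i hi]
    · congr 1
      exact Fintype.sum_of_injective e he _ _ (fun j hj => by simp [hzero' _ j hj]) fun b => rfl
  rw [← hform]
  exact (posSemidef_iff_dotProduct_mulVec.1 hsub).2 _

/-- The rank-one part of `A` carried by its column `u`; subtracting it is one step of symmetric
Gaussian elimination. It is zero if `A u u = 0`. -/
def pivotPart (A : Matrix W W ℝ) (u : W) : Matrix W W ℝ :=
  of fun i j => A i u * A j u / A u u

lemma pivotPart_apply (A : Matrix W W ℝ) (u i j : W) :
    pivotPart A u i j = A i u * A j u / A u u := rfl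

lemma posSemidef_of_mul_mul_div [Finite W] (a : W → ℝ) {c : ℝ} (hc : 0 ≤ c) :
    (of fun i j => a i * a j / c : Matrix W W ℝ).PosSemidef := by
  convert (posSemidef_vecMulVec_self_star a).smul (inv_nonneg.2 hc)
  ext i j
  simp [vecMulVec_apply, div_eq_inv_mul]

lemma posSemidef_pivotPart [Finite W] {A : Matrix W W ℝ} (hA : A.PosSemidef) (u : W) :
    (pivotPart A u).PosSemidef :=
  posSemidef_of_mul_mul_div (fun i => A i u) hA.diag_nonneg

lemma posSemidef_map_psiF_pivotPart [Finite W] (α : ℝ) {A : Matrix W W ℝ} (hA : A.PosSemidef)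
    (u : W) : ((pivotPart A u).map (psiF α)).PosSemidef := by
  have h := posSemidef_of_mul_mul_div (fun i => psiF α (A i u))
    (psiF_nonneg α (hA.diag_nonneg (i := u)))
  simp only [← psiF_mul, ← psiF_div] at h
  exact h

lemma pivotPart_apply_left {A : Matrix W W ℝ} (hA : A.PosSemidef) (u j : W) :
    pivotPart A u u j = A u j := by
  rw [posSemidef_apply_comm hA u j, pivotPart_apply]
  by_cases hu : A u u = 0
  · simp [apply_eq_zero_of_posSemidef_of_diag_eq_zero hA hu]
  · exact mul_div_cancel_left₀ _ hu

lemma posSemidef_sub_pivotPart [Finite W] {A : Matrix W W ℝ} (hA : A.PosSemidef) (u : W) :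
    (A - pivotPart A u).PosSemidef := by
  classical
  have := Fintype.ofFinite W
  set P : Matrix W W ℝ := 1 - vecMulVec (Pi.single u 1) (fun j => A j u / A u u) with hP
  have hAP : A * P = A - pivotPart A u := by
    rw [hP, mul_sub, mul_vecMulVec, Matrix.mul_one]
    ext i j
    simp [vecMulVec_apply, pivotPart_apply, mul_div_assoc]
  have hPAP : Pᴴ * A * P = A - pivotPart A u := by
    rw [Matrix.mul_assoc, hAP, hP]
    ext i j
    simp [sub_mul, vecMulVec_mul, vecMulVec_apply, pivotPart_apply_left hA]
  rw [← hPAP]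
  exact hA.conjTranspose_mul_mul_same P

end PosSemidef

section EntrywiseMaps

variable {V W : Type*}

lemma posSemidef_map_add {f : ℝ → ℝ}
    (hadd : ∀ a b, 0 ≤ a → 0 ≤ b → f a + f b ≤ f (a + b)) {B C : Matrix W W ℝ}
    (hB : B.PosSemidef) (hC : C.PosSemidef) (hfB : (B.map f).PosSemidef)
    (hfC : (C.map f).PosSemidef)
    (hoff : ∀ i j, i ≠ j → f (B i j + C i j) = f (B i j) + f (C i j)) :
    ((B + C).map f).PosSemidef := by
  classical
  have hdiag := PosSemidef.diagonal
    (d := fun i => f (B i i + C i i) - (f (B i i) + f (C i i)))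
    fun i => sub_nonneg.2 (hadd _ _ hB.diag_nonneg hC.diag_nonneg)
  convert (hfB.add hfC).add hdiag
  ext i j
  by_cases hij : i = j
  · subst hij
    simp
  · simp [hij, hoff i j hij]

lemma posSemidef_map_add_sub_map {f f' : ℝ → ℝ} (hf : ∀ x, HasDerivAt f (f' x) x)
    {Y D : Matrix W W ℝ} (hY : Y.IsHermitian) (hD : D.IsHermitian)
    (hf' : ∀ t ∈ Ioo (0 : ℝ) 1, ((Y + t • D).map f' ⊙ D).PosSemidef) :
    ((Y + D).map f - Y.map f).PosSemidef := by
  refine ⟨((hY.add hD).map f fun _ => rfl).sub (hY.map f fun _ => rfl), fun z => ?_⟩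
  let F (t : ℝ) : ℝ := z.sum fun i zi => z.sum fun j zj => zi * f ((Y + t • D) i j) * zj
  let F' (t : ℝ) : ℝ :=
    z.sum fun i zi => z.sum fun j zj => zi * ((Y + t • D).map f' ⊙ D) i j * zj
  have hF (t : ℝ) : HasDerivAt F (F' t) t := by
    refine HasDerivAt.fun_sum fun i _ => HasDerivAt.fun_sum fun j _ => ?_
    have hline : HasDerivAt (fun t => (Y + t • D) i j) (D i j) t := by
      simpa using ((hasDerivAt_id t).mul_const (D i j)).const_add (Y i j)
    exact (((hf _).comp t hline).const_mul (z i)).mul_const (z j)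
  have hmono : MonotoneOn F (Icc 0 1) := by
    refine monotoneOn_of_hasDerivWithinAt_nonneg (convex_Icc 0 1)
      (fun t _ => (hF t).continuousAt.continuousWithinAt) (fun t _ => (hF t).hasDerivWithinAt)
      fun t ht => ?_
    rw [interior_Icc] at ht
    exact (hf' t ht).2 z
  have h01 : F 0 ≤ F 1 := hmono (by simp) (by simp) zero_le_one
  simpa [F, mul_sub, sub_mul, Finsupp.sum_sub] using h01

lemma posSemidef_map_abs_rpow_fin_two {β : ℝ} (hβ : 0 ≤ β) {A : Matrix (Fin 2) (Fin 2) ℝ}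
    (hA : A.PosSemidef) : (A.map fun x => |x| ^ β).PosSemidef := by
  obtain ⟨hcomm, -, -, hsq⟩ := posSemidef_fin_two_iff.1 hA
  refine posSemidef_fin_two_iff.2
    ⟨by simp [hcomm], Real.rpow_nonneg (abs_nonneg _) _, Real.rpow_nonneg (abs_nonneg _) _, ?_⟩
  calc (|A 0 1| ^ β) ^ 2 = |A 0 1 ^ 2| ^ β := by
        rw [sq, ← Real.mul_rpow (abs_nonneg _) (abs_nonneg _), ← abs_mul, sq]
    _ ≤ |A 0 0 * A 1 1| ^ β :=
        Real.rpow_le_rpow (abs_nonneg _) (abs_le_abs_of_nonneg (sq_nonneg _) hsq) hβ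
    _ = |A 0 0| ^ β * |A 1 1| ^ β := by
        rw [abs_mul, Real.mul_rpow (abs_nonneg _) (abs_nonneg _)]

lemma posSemidef_map_psiF_add_sub_map [Finite W] {α : ℝ} (hα : 1 ≤ α) {Y D : Matrix W W ℝ}
    (hY : Y.PosSemidef) (hD : D.PosSemidef) {e : Fin 2 → W} (he : Function.Injective e)
    (hzero : ∀ i ∉ range e, ∀ j, D i j = 0) :
    ((Y + D).map (psiF α) - Y.map (psiF α)).PosSemidef := by
  refine posSemidef_map_add_sub_map (hasDerivAt_psiF hα) hY.isHermitian hD.isHermitian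
    fun t ht => ?_
  have hM : (Y + t • D).PosSemidef := hY.add (hD.smul ht.1.le)
  have hderiv := hM.isHermitian.map (fun x => α * |x| ^ (α - 1)) fun _ => rfl
  refine posSemidef_of_submatrix (hderiv.hadamard hD.isHermitian) he
    (fun i hi j => by simp [hzero i hi]) ?_
  have habs := posSemidef_map_abs_rpow_fin_two (sub_nonneg.2 hα) (hM.submatrix e)
  exact (habs.smul (zero_le_one.trans hα)).hadamard (hD.submatrix e)

lemma posSemidef_map_psiF_fin_three {α : ℝ} (hα : 1 ≤ α) {A : Matrix (Fin 3) (Fin 3) ℝ}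
    (hA : A.PosSemidef) : (A.map (psiF α)).PosSemidef := by
  -- The increment `A - R`, with `R` the pivot part at the last index, lives on the first two.
  have hmono := posSemidef_map_psiF_add_sub_map hα (posSemidef_pivotPart hA (Fin.last 2))
    (posSemidef_sub_pivotPart hA (Fin.last 2)) (Fin.castSucc_injective 2) fun i hi j => ?_
  · simpa using hmono.add (posSemidef_map_psiF_pivotPart α hA (Fin.last 2))
  · rw [mem_range, Fin.exists_castSucc_eq, not_not] at hi
    rw [hi, Matrix.sub_apply, pivotPart_apply_left hA, sub_self]

/-- Eliminating the indices in `S` splits `A` into its Schur complement `B` and the eliminated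
part `C`. -/
lemma exists_posSemidef_add_eq [Finite W] {A : Matrix W W ℝ} (hA : A.PosSemidef) (S : Set W) :
    ∃ B C : Matrix W W ℝ, B.PosSemidef ∧ C.PosSemidef ∧ B + C = A ∧
      (∀ s ∈ S, ∀ j, B s j = 0) ∧ ∀ i, (∀ s ∈ S, A i s = 0) → ∀ j, C i j = 0 := by
  induction S, S.toFinite using Set.Finite.induction_on with
  | empty => exact ⟨A, 0, hA, .zero, add_zero A, by simp, by simp⟩
  | @insert u S _ _ ih =>
    obtain ⟨B, C, hB, hC, rfl, hBS, hCS⟩ := ih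
    refine ⟨B - pivotPart B u, C + pivotPart B u, posSemidef_sub_pivotPart hB u,
      hC.add (posSemidef_pivotPart hB u), by abel, ?_, fun i hi j => ?_⟩
    · rintro s (rfl | hs) j
      · rw [Matrix.sub_apply, pivotPart_apply_left hB, sub_self]
      · simp [pivotPart_apply, hBS s hs]
    · have hCi := hCS i fun s hs => hi s (mem_insert_of_mem u hs)
      have hBi : B i u = 0 := by simpa [hCi] using hi u (mem_insert u S)
      simp [hCi, pivotPart_apply, hBi]

end EntrywiseMaps

section Graphs

variable {V W : Type*}

/-- The entrywise map `f` sends positive semidefinite matrices with zeros outside the edge pattern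
of `G` to positive semidefinite matrices. -/
def PreservesPosSemidef (f : ℝ → ℝ) (G : SimpleGraph V) : Prop :=
  ∀ A : Matrix V V ℝ, A.PosSemidef → (∀ i j, i ≠ j → ¬G.Adj i j → A i j = 0) →
    (A.map f).PosSemidef

lemma PreservesPosSemidef.of_coalescence [Finite W] {V₁ V₂ : Type*} {f : ℝ → ℝ} (hf0 : f 0 = 0)
    (hadd : ∀ a b, 0 ≤ a → 0 ≤ b → f a + f b ≤ f (a + b)) {G : SimpleGraph W}
    {G₁ : SimpleGraph V₁} {G₂ : SimpleGraph V₂} (e₁ : G₁ ↪g G) (e₂ : G₂ ↪g G)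
    (hcover : ∀ i, i ∈ range e₁ ∨ i ∈ range e₂) (hinter : (range e₁ ∩ range e₂).Subsingleton)
    (hsep : ∀ i j, i ∉ range e₁ → j ∉ range e₂ → ¬G.Adj i j) (h₁ : PreservesPosSemidef f G₁)
    (h₂ : PreservesPosSemidef f G₂) : PreservesPosSemidef f G := by
  intro A hA hG
  obtain ⟨B, C, hB, hC, rfl, hB0, hC0⟩ := exists_posSemidef_add_eq hA (range e₁)ᶜ
  replace hC0 (j) (hj : j ∉ range e₂) : ∀ i, C j i = 0 := hC0 j fun s hs =>
    hG j s (fun hjs => hs (hjs ▸ (hcover j).resolve_right hj)) fun h => hsep s j hs hj h.symm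
  have hoff (i j) (hij : i ≠ j) : B i j = 0 ∨ C i j = 0 := by
    by_contra! h
    have hi₁ : i ∈ range e₁ := by_contra fun hi => h.1 (hB0 i hi j)
    have hi₂ : i ∈ range e₂ := by_contra fun hi => h.2 (hC0 i hi j)
    have hj₁ : j ∈ range e₁ :=
      by_contra fun hj => h.1 (posSemidef_apply_comm hB i j ▸ hB0 j hj i)
    have hj₂ : j ∈ range e₂ :=
      by_contra fun hj => h.2 (posSemidef_apply_comm hC i j ▸ hC0 j hj i)
    exact hij (hinter ⟨hi₁, hi₂⟩ ⟨hj₁, hj₂⟩)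
  have hpattern (i j) (hij : i ≠ j) (hadj : ¬G.Adj i j) : B i j = 0 ∧ C i j = 0 := by
    have hsum := hG i j hij hadj
    rw [Matrix.add_apply] at hsum
    rcases hoff i j hij with h | h <;> simpa [h] using hsum
  have hfB : (B.map f).PosSemidef := posSemidef_of_submatrix (hB.isHermitian.map f fun _ => rfl)
    e₁.injective (fun i hi j => by simp [hB0 i hi, hf0]) <|
    h₁ _ (hB.submatrix e₁) fun a b hab hadj =>
      (hpattern _ _ (e₁.injective.ne hab) (e₁.map_adj_iff.not.2 hadj)).1
  have hfC : (C.map f).PosSemidef := posSemidef_of_submatrix (hC.isHermitian.map f fun _ => rfl)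
    e₂.injective (fun i hi j => by simp [hC0 i hi, hf0]) <|
    h₂ _ (hC.submatrix e₂) fun a b hab hadj =>
      (hpattern _ _ (e₂.injective.ne hab) (e₂.map_adj_iff.not.2 hadj)).2
  refine posSemidef_map_add hadd hB hC hfB hfC fun i j hij => ?_
  rcases hoff i j hij with h | h <;> simp [h, hf0]

lemma PreservesPosSemidef.psiF_of_elimination [Finite W] {α : ℝ} (hα : 1 ≤ α) {G : SimpleGraph W}
    {G' : SimpleGraph V} {e : V → W} (he : Function.Injective e) {u : W} (hrange : range e = {u}ᶜ)
    (hind : ∀ i j, G.Adj u i → G.Adj u j → ¬G.Adj i j)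
    (hadj : ∀ a b, G.Adj (e a) (e b) → G'.Adj a b)
    (hfill : ∀ a b, a ≠ b → G.Adj u (e a) → G.Adj u (e b) → G'.Adj a b)
    (hG' : PreservesPosSemidef (psiF α) G') : PreservesPosSemidef (psiF α) G := by
  intro A hA hG
  have hne (a : V) : e a ≠ u := by simpa [hrange] using mem_range_self (f := e) a
  have hBu (j) : (A - pivotPart A u) u j = 0 := by
    rw [Matrix.sub_apply, pivotPart_apply_left hA, sub_self]
  have hP (i j) (hi : i ≠ u) (hj : j ≠ u) (hij : ¬(G.Adj u i ∧ G.Adj u j)) :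
      pivotPart A u i j = 0 := by
    rw [pivotPart_apply]
    rcases not_and_or.1 hij with h | h
    · simp [hG i u hi fun h' => h h'.symm]
    · simp [hG j u hj fun h' => h h'.symm]
  have hB := posSemidef_sub_pivotPart hA u
  have hfB : ((A - pivotPart A u).map (psiF α)).PosSemidef := by
    refine posSemidef_of_submatrix (hB.isHermitian.map _ fun _ => rfl) he (fun i hi j => ?_)
      (hG' _ (hB.submatrix e) fun a b hab hadj' => ?_)
    · obtain rfl : i = u := by simpa [hrange] using hi
      rw [map_apply, hBu, psiF_zero]
    · have hA0 := hG (e a) (e b) (he.ne hab) fun h => hadj' (hadj a b h)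
      have hP0 := hP (e a) (e b) (hne a) (hne b) fun h => hadj' (hfill a b hab h.1 h.2)
      exact sub_eq_zero.2 (hA0.trans hP0.symm)
  rw [← sub_add_cancel A (pivotPart A u)]
  refine posSemidef_map_add (fun a b => psiF_add_le hα) hB (posSemidef_pivotPart hA u) hfB
    (posSemidef_map_psiF_pivotPart α hA u) fun i j hij => ?_
  by_cases hi : i = u
  · rw [hi, hBu, psiF_zero, zero_add, zero_add]
  by_cases hj : j = u
  · rw [posSemidef_apply_comm hB, hj, hBu, psiF_zero, zero_add, zero_add]
  by_cases hij' : G.Adj u i ∧ G.Adj u j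
  · -- Two neighbours of `u` are not adjacent, so the two summands are opposite.
    simp [hG i j hij (hind i j hij'.1 hij'.2), psiF_neg, psiF_zero]
  · simp [hP i j hi hj hij', psiF_zero]

lemma cycleGraph_adj_iff_val {n : ℕ} {i j : Fin n} : (SimpleGraph.cycleGraph n).Adj i j ↔
    i ≠ j ∧ ((j : ℕ) = i + 1 ∨ (i : ℕ) = j + 1 ∨ (i : ℕ) = 0 ∧ (j : ℕ) + 1 = n ∨
      (j : ℕ) = 0 ∧ (i : ℕ) + 1 = n) := by
  rw [SimpleGraph.cycleGraph_adj']
  rcases lt_trichotomy i j with h | rfl | h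
  · rw [Fin.sub_val_of_le h.le, Fin.coe_sub_iff_lt.2 h]
    lia
  · have : NeZero n := ⟨by rintro rfl; exact i.elim0⟩
    simp
  · rw [Fin.sub_val_of_le h.le, Fin.coe_sub_iff_lt.2 h]
    lia

theorem preservesPosSemidef_psiF_cycleGraph {α : ℝ} (hα : 1 ≤ α) (n : ℕ) :
    PreservesPosSemidef (psiF α) (SimpleGraph.cycleGraph n) := by
  induction n with
  | zero => 
    intro A _ _
    rw [Subsingleton.elim (A.map (psiF α)) 0]
    exact .zero
  | succ n ih =>
    by_cases hn : n = 2
    · subst hn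
      exact fun A hA _ => posSemidef_map_psiF_fin_three hα hA
    refine .psiF_of_elimination hα (Fin.castSucc_injective n) (u := Fin.last n) ?_ ?_ ?_ ?_ ih
    · ext i
      rw [mem_range, Fin.exists_castSucc_eq, mem_compl_singleton_iff]
    all_goals
      simp only [cycleGraph_adj_iff_val, Fin.ext_iff, ne_eq, Fin.val_last, Fin.val_castSucc]
      lia

/-- The inclusion of `G` into `addCycleAt G v p`. -/
def addCycleAtInl (G : SimpleGraph V) (v : V) (p : ℕ) : G ↪g addCycleAt G v p where
  toFun := Sum.inl
  inj' := Sum.inl_injective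
  map_rel_iff' {a b} := by
    simpa [addCycleAt, G.adj_comm b a] using SimpleGraph.Adj.ne

/-- The inclusion into `addCycleAt G v (q + 1)` of the attached cycle, whose vertex `0` is `v`. -/
def addCycleAtCycle (G : SimpleGraph V) (v : V) (q : ℕ) :
    SimpleGraph.cycleGraph (q + 1) ↪g addCycleAt G v (q + 1) where
  toFun := Fin.cons (Sum.inl v) Sum.inr
  inj' := Fin.cons_injective_iff.2 ⟨by simp, Sum.inr_injective⟩
  map_rel_iff' {i j} := by
    rw [cycleGraph_adj_iff_val]
    cases i using Fin.cases <;> cases j using Fin.cases <;>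
      simp only [addCycleAt, Function.Embedding.coeFn_mk, Fin.cons_zero, Fin.cons_succ,
        SimpleGraph.fromRel_adj, SimpleGraph.irrefl, ne_eq, reduceCtorEq, Sum.inr.injEq,
        Fin.ext_iff, Fin.val_zero, Fin.val_succ] <;> lia

theorem CactusBuilt.preservesPosSemidef_psiF {α : ℝ} (hα : 1 ≤ α) {W : Type} {G : SimpleGraph W}
    (hG : CactusBuilt G) [hW : Finite W] : PreservesPosSemidef (psiF α) G := by
  induction hG generalizing hW with
  | single =>
    exact SimpleGraph.cycleGraph_one_eq_bot ▸ preservesPosSemidef_psiF_cycleGraph hα 1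
  | @attach W G v p hp _ ih =>
    obtain ⟨q, rfl⟩ : ∃ q, p = q + 1 := ⟨p - 1, by lia⟩
    have : Finite W := Finite.sum_left (Fin (q + 1 - 1))
    have hrange : range (addCycleAtInl G v (q + 1)) = range Sum.inl := rfl
    have hrange' : range (addCycleAtCycle G v q) = insert (Sum.inl v) (range Sum.inr) :=
      Fin.range_cons _ _
    refine .of_coalescence (psiF_zero α) (fun a b => psiF_add_le hα) (addCycleAtInl G v (q + 1))
      (addCycleAtCycle G v q) ?_ ?_ ?_ ih (preservesPosSemidef_psiF_cycleGraph hα (q + 1))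
    · rintro (a | i) <;> simp [hrange, hrange']
    · rw [hrange, hrange']
      rintro _ ⟨⟨a, rfl⟩, ha⟩ _ ⟨⟨b, rfl⟩, hb⟩
      simp_all
    · intro i j hi hj
      rw [hrange] at hi
      rw [hrange'] at hj
      rcases i with a | i <;> rcases j with b | j <;> simp_all [addCycleAt]

theorem CactusBuilt.connected {W : Type} {G : SimpleGraph W} (hG : CactusBuilt G) :
    G.Connected := by
  induction hG with
  | single => exact .of_subsingleton
  | @attach W G v p _ _ ih =>
    refine SimpleGraph.connected_iff_exists_forall_reachable _ |>.2 ⟨Sum.inl v, ?_⟩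
    rintro (a | ⟨i, hi⟩)
    · exact (ih.preconnected v a).map (addCycleAtInl G v p).toHom
    · induction i with
      | zero => exact SimpleGraph.Adj.reachable (by simp [addCycleAt])
      | succ i IH =>
        exact (IH (by lia)).trans (SimpleGraph.Adj.reachable (by simp [addCycleAt]))

lemma exists_adj_adj_of_connected [Finite V] {G : SimpleGraph V} (hG : G.Connected)
    (hcard : 3 ≤ Nat.card V) : ∃ m x y, x ≠ y ∧ G.Adj m x ∧ G.Adj m y := by
  classical
  have := Fintype.ofFinite V
  obtain ⟨m, hm⟩ : ∃ m, 1 < G.degree m := by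
    by_contra! hdeg
    have hsum : ∑ m, G.degree m ≤ Fintype.card V := by
      simpa using Finset.sum_le_card_nsmul Finset.univ _ 1 fun m _ => hdeg m
    have hedge := hG.card_vert_le_card_edgeSet_add_one
    rw [G.sum_degrees_eq_twice_card_edges, G.edgeFinset_card] at hsum
    simp only [Nat.card_eq_fintype_card] at hedge hcard
    lia
  obtain ⟨x, hx, y, hy, hxy⟩ := Finset.one_lt_card.1 hm
  exact ⟨m, x, y, hxy, (G.mem_neighborFinset m x).1 hx, (G.mem_neighborFinset m y).1 hy⟩

end Graphs

section ExponentSets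

variable {V : Type*} [Fintype V] {G : SimpleGraph V} {α : ℝ}

lemma powEnt_of_nonneg (α : ℝ) {x : ℝ} (hx : 0 ≤ x) : powEnt α x = psiF α x := by
  rcases hx.eq_or_lt with rfl | hx
  · rw [powEnt, if_pos rfl, psiF_zero]
  · rw [powEnt, if_neg hx.ne', psiF_of_pos α hx]

lemma phiF_of_nonneg (α : ℝ) {x : ℝ} (hx : 0 ≤ x) : phiF α x = powEnt α x := by
  rw [phiF, powEnt, abs_of_nonneg hx]

lemma phiF_eq_psiF_half_mul_self (α x : ℝ) : phiF α x = psiF (α / 2) (x * x) := by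
  by_cases hx : x = 0
  · simp [hx, phiF, psiF_zero]
  · rw [phiF, if_neg hx, psiF_of_pos _ (mul_self_pos.2 hx), ← abs_mul_abs_self,
      Real.mul_rpow (abs_nonneg x) (abs_nonneg x), ← Real.rpow_add (abs_pos.2 hx), add_halves]

lemma PsetG_subset_univ (I : Set ℝ) : PsetG G I ⊆ PsetG G univ :=
  fun _ hA => ⟨hA.1, fun _ _ => mem_univ _, hA.2.2⟩

lemma map_mem_PsetG_univ {f : ℝ → ℝ} (hf : f 0 = 0) {I : Set ℝ} {A : Matrix V V ℝ}
    (hA : A ∈ PsetG G I) (hfA : (A.map f).PosSemidef) : A.map f ∈ PsetG G univ :=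
  ⟨hfA, fun _ _ => mem_univ _, fun i j hij hadj => by rw [map_apply, hA.2.2 i j hij hadj, hf]⟩

lemma mem_HsetPsi_iff : α ∈ HsetPsi G ↔ PreservesPosSemidef (psiF α) G :=
  ⟨fun h A hA hG => (h A ⟨hA, fun _ _ => mem_univ _, hG⟩).1,
    fun h A hA => map_mem_PsetG_univ (psiF_zero α) hA (h A hA.1 hA.2.2)⟩

lemma HsetPsi_subset_HsetG : HsetPsi G ⊆ HsetG G := fun α hα A hA => by
  rw [show A.map (powEnt α) = A.map (psiF α) from
    Matrix.ext fun i j => powEnt_of_nonneg α (hA.2.1 i j)]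
  exact hα A (PsetG_subset_univ _ hA)

lemma HsetPhi_subset_HsetG : HsetPhi G ⊆ HsetG G := fun α hα A hA => by
  rw [← show A.map (phiF α) = A.map (powEnt α) from
    Matrix.ext fun i j => phiF_of_nonneg α (hA.2.1 i j)]
  exact hα A (PsetG_subset_univ _ hA)

lemma mem_HsetPhi_of_half_mem_HsetPsi (hα : α / 2 ∈ HsetPsi G) : α ∈ HsetPhi G := fun A hA => by
  rw [show A.map (phiF α) = (A ⊙ A).map (psiF (α / 2)) from
    Matrix.ext fun i j => phiF_eq_psiF_half_mul_self α (A i j)]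
  exact hα _ ⟨hA.1.hadamard hA.1, fun _ _ => mem_univ _, fun i j hij hadj => by
    rw [hadamard_apply, hA.2.2 i j hij hadj, mul_zero]⟩

lemma exists_mem_PsetG_submatrix_eq {m x y : V} (hxy : x ≠ y) (hx : G.Adj m x) (hy : G.Adj m y) :
    ∃ A ∈ PsetG G (Ici (0 : ℝ)),
      A.submatrix ![m, x, y] ![m, x, y] = !![2, 1, 1; 1, 1, 0; 1, 0, 1] := by
  classical
  let edge (z : V) : V → ℝ := Pi.single m 1 + Pi.single z 1
  have edge_nonneg (z i : V) : 0 ≤ edge z i := by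
    simp only [edge, Pi.add_apply, Pi.single_apply]
    positivity
  refine ⟨vecMulVec (edge x) (star (edge x)) + vecMulVec (edge y) (star (edge y)),
    ⟨(posSemidef_vecMulVec_self_star _).add (posSemidef_vecMulVec_self_star _),
      fun i j => add_nonneg (mul_nonneg (edge_nonneg x i) (edge_nonneg x j))
        (mul_nonneg (edge_nonneg y i) (edge_nonneg y j)), fun i j hij hadj => ?_⟩, ?_⟩
  · have hx' := hx.symm
    have hy' := hy.symm
    simp only [Matrix.add_apply, vecMulVec_apply, edge, Pi.add_apply, Pi.single_apply,
      star_trivial]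
    grind
  · ext i j
    fin_cases i <;> fin_cases j <;>
      simp [edge, vecMulVec_apply, hx.ne, hy.ne, hx.ne', hy.ne', hxy, hxy.symm, one_add_one_eq_two]

lemma two_mul_apply_one_le_of_posSemidef_map {f : ℝ → ℝ} (hf : f 0 = 0)
    (h : ((!![2, 1, 1; 1, 1, 0; 1, 0, 1] : Matrix (Fin 3) (Fin 3) ℝ).map f).PosSemidef) :
    2 * f 1 ≤ f 2 := by
  have hform := (posSemidef_iff_dotProduct_mulVec.1 h).2 ![1, -1, -1]
  simp only [dotProduct, mulVec, Pi.star_apply, star_trivial, Fin.sum_univ_three, map_apply,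
    of_apply, cons_val', cons_val, hf] at hform
  linarith

lemma HsetG_subset_Ici_one {m x y : V} (hxy : x ≠ y) (hx : G.Adj m x) (hy : G.Adj m y) :
    HsetG G ⊆ Ici 1 := fun α hα => by
  obtain ⟨A, hA, hAsub⟩ := exists_mem_PsetG_submatrix_eq hxy hx hy
  have hblock := (hα A hA).1.submatrix ![m, x, y]
  rw [submatrix_map, hAsub] at hblock
  have h2 : (2 : ℝ) ^ (1 : ℝ) ≤ 2 ^ α := by
    simpa [powEnt] using two_mul_apply_one_le_of_posSemidef_map (by simp [powEnt]) hblock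
  exact (Real.rpow_le_rpow_left_iff one_lt_two).1 h2

end ExponentSets

/-- **Corollary 4.12 (cactus graphs)**: for a connected cactus graph `G` with at least 3
vertices, `H_G = H_G^ψ = [1,∞)` and `[2,∞) ⊆ H_G^φ ⊆ [1,∞)`. -/
theorem Hsets_cactus {W : Type} [Fintype W] [DecidableEq W] (G : SimpleGraph W)
    (hc : CactusBuilt G) (hcard : 3 ≤ Fintype.card W) :
    HsetG G = Ici (1 : ℝ) ∧ HsetPsi G = Ici (1 : ℝ) ∧
    Ici (2 : ℝ) ⊆ HsetPhi G ∧ HsetPhi G ⊆ Ici (1 : ℝ) := by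
  rw [← Nat.card_eq_fintype_card] at hcard
  obtain ⟨m, x, y, hxy, hx, hy⟩ := exists_adj_adj_of_connected hc.connected hcard
  have hG : HsetG G ⊆ Ici 1 := HsetG_subset_Ici_one hxy hx hy
  have hψ : Ici 1 ⊆ HsetPsi G := fun α hα => mem_HsetPsi_iff.2 (hc.preservesPosSemidef_psiF hα)
  have hφ : Ici 2 ⊆ HsetPhi G := fun α hα =>
    mem_HsetPhi_of_half_mem_HsetPsi (hψ <| mem_Ici.2 <| (one_le_div₀ two_pos).2 hα)
  exact ⟨hG.antisymm (hψ.trans HsetPsi_subset_HsetG), (HsetPsi_subset_HsetG.trans hG).antisymm hψ,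
    hφ, HsetPhi_subset_HsetG.trans hG⟩
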